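/- Let z̄ = (b̄, w̄, v̄, M̄, q̄) ∈ Λ with (v̄, b̄) ≠ (0, 0) (equivalently, V(z̄)e₃ ≠ 0), and let σ denote the line segment with endpoints −z̄ and z̄ in ℝ×ℝ²×ℝ²×𝕊₀²×ℝ. Then there exists α > 0 such that for every ε > 0 there exist smooth functions b: ℝ³ → ℝ, w, v: ℝ³ → ℝ², M: ℝ³ → 𝕊₀², q: ℝ³ → ℝ satisfying: (i) the matrix field V(y) := V((b,w,v,M,q)(y)) satisfies Σ_{j=1}^{3} ∂_{y_j} V_{ij}(y) = 0 for all y ∈ ℝ³ and i = 1,…,4; (ii) (b,w,v,M,q)(y) = 0 for all y outside the open unit ball B₁(0) ⊂ ℝ³; (iii) dist((b,w,v,M,q)(y), σ) < ε for all y ∈ ℝ³; (iv) ∫_{ℝ³} |v(y)| dy ≥ α |v̄| and ∫_{ℝ³} |b(y)| dy ≥ α |b̄|. -/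

import Mathlib

/-!
Every `z̄ ∈ Λ` with `(v̄, b̄) ≠ 0` admits a second-order potential: a linear map `Q` from Hessians to
states such that `V(Q(D²f))` is row-wise divergence free for every smooth scalar `f` (`potL_div`,
`div_potL_hess`) and `Q(ξ ⊗ ξ) = z̄`, where `V(z̄)ξ = 0` (`exists_potL`). The upper three rows are a
double curl of a symmetric potential whose upper left `2×2` block vanishes, which keeps the `(3,3)`
entry zero; the last row is a curl. Surjectivity of the symbol needs `(ξ₁, ξ₂) ≠ 0`, and this is
exactly what `(v̄, b̄) ≠ 0` gives.

For a bump function `χ`, the field `z = Q(D²f)` with `f = -N⁻² χ cos(N ξ·y + θ)` equals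
`χ cos(N ξ·y + θ) z̄` up to an error `G / N`, with `G` independent of `N` and `θ` (`exists_wave`).
The leading term lies in the segment `[-z̄, z̄]`, so large `N` yields the `ε`-closeness. Since
`|cos| + |sin| ≥ 1`, for each `N` some phase `θ` satisfies `∫ χ |cos(N ξ·y + θ)| ≥ ½ ∫ χ`
(`exists_phase`); absorbing the error for large `N` gives the mass bounds with `α = ¼ ∫ χ`
(`mass_bound`).
-/

open Matrix MeasureTheory

noncomputable section

/-- The 4×3 matrix `V(z)` associated to a state `z = (b, w, v, M, q)`, flattened into `ℝ⁸` as
`z = (b, w₁, w₂, v₁, v₂, M₁₁, M₁₂, q)` with `M = ![![M₁₁, M₁₂], ![M₁₂, −M₁₁]] ∈ 𝕊₀²`: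
first two rows `(M + q I₂ | v)`, third row `(vᵀ | 0)`, fourth row `(wᵀ | b)`. -/
def Vmat8 (z : EuclideanSpace ℝ (Fin 8)) : Matrix (Fin 4) (Fin 3) ℝ :=
  ![![z 5 + z 7, z 6, z 3],
    ![z 6, -z 5 + z 7, z 4],
    ![z 3, z 4, 0],
    ![z 1, z 2, z 0]]

/-- The wave cone `Λ`. -/
def Lambda8 : Set (EuclideanSpace ℝ (Fin 8)) :=
  {z | ∃ ξ : Fin 3 → ℝ, ξ ≠ 0 ∧ Vmat8 z *ᵥ ξ = 0}


/-- The space-time `ℝ³`. -/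
abbrev E3 := EuclideanSpace ℝ (Fin 3)

/-- The space `ℝ⁸` of states. -/
abbrev E8 := EuclideanSpace ℝ (Fin 8)

/-! ### The second-order potential -/

/-- The entry `V(z)ᵢⱼ` as a continuous linear functional of the state `z`. -/
def VmatL (i : Fin 4) (j : Fin 3) : E8 →L[ℝ] ℝ :=
  LinearMap.toContinuousLinearMap
    { toFun := fun z => Vmat8 z i j
      map_add' := fun x y => by
        fin_cases i <;> fin_cases j <;> simp [Vmat8] <;> ring
      map_smul' := fun c x => by
        fin_cases i <;> fin_cases j <;> simp [Vmat8] <;> ring }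

/-- Constant-coefficient second-order operator, as a linear function of the Hessian `H`. Its first
three matrix rows are the double curl of the symmetric matrix potential with vanishing upper left
`2×2` block, `(1,3)` and `(2,3)` entries `p₁, p₂`, and `(3,3)` entry `φ`; its fourth row is the curl
of `A` composed with the derivative in direction `η`. -/
def potL (φ p₁ p₂ : ℝ) (η A : Fin 3 → ℝ) : (Fin 3 → Fin 3 → ℝ) →ₗ[ℝ] E8 where
  toFun H := WithLp.toLp 2
    ![η 0 * (H 0 0 * A 1 - H 0 1 * A 0) + η 1 * (H 1 0 * A 1 - H 1 1 * A 0)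
        + η 2 * (H 2 0 * A 1 - H 2 1 * A 0),
      η 0 * (H 0 1 * A 2 - H 0 2 * A 1) + η 1 * (H 1 1 * A 2 - H 1 2 * A 1)
        + η 2 * (H 2 1 * A 2 - H 2 2 * A 1),
      η 0 * (H 0 2 * A 0 - H 0 0 * A 2) + η 1 * (H 1 2 * A 0 - H 1 0 * A 2)
        + η 2 * (H 2 2 * A 0 - H 2 0 * A 2),
      p₂ * H 0 1 - p₁ * H 1 1,
      - (p₂ * H 0 0 - p₁ * H 0 1),
      ((φ * H 1 1 - 2 * p₂ * H 1 2) - (φ * H 0 0 - 2 * p₁ * H 0 2)) / 2,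
      - φ * H 0 1 + p₂ * H 0 2 + p₁ * H 1 2,
      ((φ * H 1 1 - 2 * p₂ * H 1 2) + (φ * H 0 0 - 2 * p₁ * H 0 2)) / 2]
  map_add' H K := by
    ext k; fin_cases k <;> simp <;> ring
  map_smul' c H := by
    ext k; fin_cases k <;> simp <;> ring

/-- The operator `potL` is annihilated by the row-wise divergence: `T j a b` plays the role of the
third derivatives `∂ⱼ∂ₐ∂_b f`. -/
lemma potL_div (φ p₁ p₂ : ℝ) (η A : Fin 3 → ℝ) (T : Fin 3 → Fin 3 → Fin 3 → ℝ)
    (h₁ : ∀ j a b, T j a b = T a j b) (h₂ : ∀ j a b, T j a b = T j b a) (i : Fin 4) :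
    ∑ j, VmatL i j (potL φ p₁ p₂ η A (T j)) = 0 := by
  have e1 := h₁ 1 0 0
  have e2 := h₁ 2 0 0
  have e3 := h₁ 1 0 1
  have e4 := h₁ 2 0 1
  have e5 := h₁ 1 0 2
  have e6 := h₁ 2 0 2
  have e7 := h₁ 2 1 0
  have e8 := h₁ 2 1 1
  have e9 := h₁ 2 1 2
  have f1 := h₂ 0 1 0
  have f2 := h₂ 1 1 0
  have f3 := h₂ 2 1 0
  have f4 := h₂ 0 2 0
  have f5 := h₂ 1 2 0
  have f6 := h₂ 2 2 0
  have f7 := h₂ 0 2 1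
  have f8 := h₂ 1 2 1
  have f9 := h₂ 2 2 1
  fin_cases i <;>
    simp [Fin.sum_univ_three, VmatL, potL, Vmat8] <;> grind

/-- Every state of the wave cone with `(v̄, b̄) ≠ 0` is the symbol of some `potL` at the direction
`ξ` in the kernel; `(v̄, b̄) ≠ 0` forces `(ξ₁, ξ₂) ≠ 0`, which is what makes the symbol
surjective. -/
lemma exists_potL (zb : E8) (hzb : zb ∈ Lambda8) (hne : ¬(zb 3 = 0 ∧ zb 4 = 0 ∧ zb 0 = 0)) :
    ∃ (ξ : Fin 3 → ℝ) (φ p₁ p₂ : ℝ) (η A : Fin 3 → ℝ),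
      potL φ p₁ p₂ η A (fun a b => ξ a * ξ b) = zb := by
  obtain ⟨ξ, hξ, hV⟩ := hzb
  have r0 := congrFun hV 0
  have r1 := congrFun hV 1
  have r2 := congrFun hV 2
  have r3 := congrFun hV 3
  simp [Vmat8, Matrix.mulVec, dotProduct, Fin.sum_univ_three] at r0 r1 r2 r3
  have hρ : ξ 0 ^ 2 + ξ 1 ^ 2 ≠ 0 := by
    intro h
    have h0 : ξ 0 = 0 := by nlinarith [sq_nonneg (ξ 0), sq_nonneg (ξ 1)]
    have h1 : ξ 1 = 0 := by nlinarith [sq_nonneg (ξ 0), sq_nonneg (ξ 1)]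
    have h2 : ξ 2 ≠ 0 := by
      intro h2
      apply hξ
      ext k; fin_cases k <;> simp [h0, h1, h2]
    simp [h0, h1, h2] at r0 r1 r3
    exact hne ⟨r0, r1, r3⟩
  have hs : ξ 0 ^ 2 + ξ 1 ^ 2 + ξ 2 ^ 2 ≠ 0 := by
    have : 0 < ξ 0 ^ 2 + ξ 1 ^ 2 := lt_of_le_of_ne (by positivity) hρ.symm
    positivity
  obtain ⟨r, hr⟩ : ∃ r, r * (ξ 0 ^ 2 + ξ 1 ^ 2) = 1 := ⟨_, inv_mul_cancel₀ hρ⟩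
  obtain ⟨s, hs⟩ : ∃ s, s * (ξ 0 ^ 2 + ξ 1 ^ 2 + ξ 2 ^ 2) = 1 := ⟨_, inv_mul_cancel₀ hs⟩
  -- `r = (ξ₁² + ξ₂²)⁻¹` and `s = |ξ|⁻²`. The number `ω = ξ₁p₂ - ξ₂p₁` is determined by
  -- `v̄ = ω (ξ₂, -ξ₁)`, and `φ` by the trace `2q̄`. With `η = s ξ` one has `η·ξ = 1`, and
  -- `A = s (w̄, b̄) × ξ` solves `ξ × A = (w̄, b̄)` because `(w̄, b̄) ⟂ ξ`.
  refine ⟨ξ, 2 * zb 7 * r, -(ξ 1 * (ξ 1 * zb 3 - ξ 0 * zb 4) * r ^ 2),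
    ξ 0 * (ξ 1 * zb 3 - ξ 0 * zb 4) * r ^ 2, fun k => s * ξ k,
    ![s * (zb 2 * ξ 2 - zb 0 * ξ 1), s * (zb 0 * ξ 0 - zb 1 * ξ 2),
      s * (zb 1 * ξ 1 - zb 2 * ξ 0)], ?_⟩
  ext k
  fin_cases k
  all_goals
    simp [potL]
    generalize ξ 0 = x at *
    generalize ξ 1 = y at *
    generalize ξ 2 = t at *
  · linear_combination zb 0 * (s * (x ^ 2 + y ^ 2 + t ^ 2) + 1) * hs
      - s ^ 2 * (x ^ 2 + y ^ 2 + t ^ 2) * t * r3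
  · linear_combination zb 1 * (s * (x ^ 2 + y ^ 2 + t ^ 2) + 1) * hs
      - s ^ 2 * (x ^ 2 + y ^ 2 + t ^ 2) * x * r3
  · linear_combination zb 2 * (s * (x ^ 2 + y ^ 2 + t ^ 2) + 1) * hs
      - s ^ 2 * (x ^ 2 + y ^ 2 + t ^ 2) * y * r3
  · linear_combination (y * (y * zb 3 - x * zb 4) * r + zb 3) * hr - r * x * r2
  · linear_combination (-x * (y * zb 3 - x * zb 4) * r + zb 4) * hr - r * y * r2
  · linear_combination (zb 5 - t * r * (x * zb 3 - y * zb 4)) * hr - r * (x * r0 - y * r1)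
      - t * r ^ 2 * (y ^ 2 - x ^ 2) * r2
  · linear_combination (zb 6 - t * r * (x * zb 4 + y * zb 3)) * hr - r * (x * r1 + y * r0)
      + 2 * t * r ^ 2 * x * y * r2
  · linear_combination zb 7 * hr

/-! ### Directional derivatives -/

/-- The directional derivative `∂ᵤ f`. -/
def dd (u : E3) (f : E3 → ℝ) : E3 → ℝ := fun y => fderiv ℝ f y u

lemma dd_contDiff (u : E3) {f : E3 → ℝ} (hf : ContDiff ℝ (⊤ : ℕ∞) f) :
    ContDiff ℝ (⊤ : ℕ∞) (dd u f) :=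
  (hf.fderiv_right (m := (⊤ : ℕ∞)) (by simp)).clm_apply contDiff_const

lemma dd_comm (u v : E3) {f : E3 → ℝ} (hf : ContDiff ℝ (⊤ : ℕ∞) f) :
    dd u (dd v f) = dd v (dd u f) := by
  ext y
  have hd : DifferentiableAt ℝ (fderiv ℝ f) y :=
    ((hf.fderiv_right (m := (⊤ : ℕ∞)) (by simp)).differentiable (by simp)) y
  have key : ∀ a b : E3, dd a (dd b f) y = fderiv ℝ (fderiv ℝ f) y a b := by
    intro a b
    have := fderiv_clm_apply hd (differentiableAt_const b)
    change fderiv ℝ (fun y => fderiv ℝ f y b) y a = _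
    simp [this]
  rw [key, key]
  exact (hf.contDiffAt.isSymmSndFDerivAt
    (by simpa using WithTop.coe_le_coe.2 (le_top : (2 : ℕ∞) ≤ ⊤))) u v

lemma dd_eq_zero (u : E3) {f : E3 → ℝ} {S : Set E3} (hS : IsClosed S)
    (hf : ∀ y ∉ S, f y = 0) : ∀ y ∉ S, dd u f y = 0 := by
  intro y hy
  have : f =ᶠ[nhds y] fun _ => 0 := by
    filter_upwards [hS.isOpen_compl.mem_nhds hy] with x hx using hf x hx
  simp [dd, this.fderiv_eq]

lemma dd_mul_cos (u : E3) {g : E3 → ℝ} (hg : ContDiff ℝ (⊤ : ℕ∞) g) (l : E3 →L[ℝ] ℝ) (θ : ℝ) :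
    dd u (fun y => g y * Real.cos (l y + θ)) = fun y =>
      dd u g y * Real.cos (l y + θ) + l u * (g y * Real.cos (l y + (θ + Real.pi / 2))) := by
  ext y
  have h1 : HasFDerivAt g (fderiv ℝ g y) y := (hg.differentiable (by simp) y).hasFDerivAt
  have h2 : HasFDerivAt (fun y => l y + θ) l y := l.hasFDerivAt.add_const θ
  have h3 := h1.mul h2.cos
  have e : (fun y => g y * Real.cos (l y + θ)) = g * fun y => Real.cos (l y + θ) := rfl
  rw [dd, e, h3.fderiv, ← add_assoc, Real.cos_add_pi_div_two]
  simp [dd]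
  ring

lemma dd_add (u : E3) {f g : E3 → ℝ} (hf : ContDiff ℝ (⊤ : ℕ∞) f) (hg : ContDiff ℝ (⊤ : ℕ∞) g) :
    dd u (fun y => f y + g y) = fun y => dd u f y + dd u g y := by
  ext y
  simp [dd, fderiv_fun_add (hf.differentiable (by simp) y) (hg.differentiable (by simp) y)]

lemma dd_const_mul (u : E3) (c : ℝ) {f : E3 → ℝ} (hf : ContDiff ℝ (⊤ : ℕ∞) f) :
    dd u (fun y => c * f y) = fun y => c * dd u f y := by
  ext y
  simp [dd, fderiv_const_mul (hf.differentiable (by simp) y)]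

lemma dd_dd_mul_cos (u v : E3) {g : E3 → ℝ} (hg : ContDiff ℝ (⊤ : ℕ∞) g) (l : E3 →L[ℝ] ℝ)
    (θ : ℝ) :
    dd u (dd v fun y => g y * Real.cos (l y + θ)) = fun y =>
      dd u (dd v g) y * Real.cos (l y + θ)
        + (l u * dd v g y + l v * dd u g y) * Real.cos (l y + (θ + Real.pi / 2))
        + l u * l v * g y * Real.cos (l y + (θ + Real.pi / 2 + Real.pi / 2)) := by
  have hcos : ∀ θ', ContDiff ℝ (⊤ : ℕ∞) fun y => Real.cos (l y + θ') := fun θ' =>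
    Real.contDiff_cos.comp (l.contDiff.add contDiff_const)
  rw [dd_mul_cos v hg, dd_add u ((dd_contDiff v hg).mul (hcos _))
    (contDiff_const.mul (hg.mul (hcos _))), dd_const_mul u _ (hg.mul (hcos _)),
    dd_mul_cos u (dd_contDiff v hg), dd_mul_cos u hg]
  ext y
  ring

/-- The Hessian of `f`. -/
def hess (f : E3 → ℝ) (y : E3) : Fin 3 → Fin 3 → ℝ := fun a b =>
  dd (EuclideanSpace.single a 1) (dd (EuclideanSpace.single b 1) f) y

lemma hess_contDiff {f : E3 → ℝ} (hf : ContDiff ℝ (⊤ : ℕ∞) f) :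
    ContDiff ℝ (⊤ : ℕ∞) (hess f) :=
  contDiff_pi.2 fun _ => contDiff_pi.2 fun _ => dd_contDiff _ (dd_contDiff _ hf)

lemma div_potL_hess (φ p₁ p₂ : ℝ) (η A : Fin 3 → ℝ) {f : E3 → ℝ} (hf : ContDiff ℝ (⊤ : ℕ∞) f)
    (y : E3) (i : Fin 4) :
    ∑ j : Fin 3, fderiv ℝ (fun y' => Vmat8 (potL φ p₁ p₂ η A (hess f y')) i j) y
      (EuclideanSpace.single j 1) = 0 := by
  rw [← potL_div φ p₁ p₂ η A (fun j a b => dd (EuclideanSpace.single j 1)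
    (dd (EuclideanSpace.single a 1) (dd (EuclideanSpace.single b 1) f)) y)
    (fun j a b => by rw [dd_comm _ _ (dd_contDiff _ hf)])
    (fun j a b => by rw [dd_comm (EuclideanSpace.single a 1) _ hf]) i]
  refine Finset.sum_congr rfl fun j _ => ?_
  have hH : DifferentiableAt ℝ (hess f) y := (hess_contDiff hf).differentiable (by simp) y
  have h := ((VmatL i j).comp (potL φ p₁ p₂ η A).toContinuousLinearMap).hasFDerivAt.comp y
    hH.hasFDerivAt
  have e : (fun y' => Vmat8 (potL φ p₁ p₂ η A (hess f y')) i j) =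
    ((VmatL i j).comp (potL φ p₁ p₂ η A).toContinuousLinearMap) ∘ hess f := rfl
  rw [e, h.fderiv]
  simp only [ContinuousLinearMap.comp_apply, LinearMap.coe_toContinuousLinearMap']
  congr 2
  ext a b
  have h1 : HasFDerivAt (fun y => hess f y a b) _ y :=
    hasFDerivAt_pi'.1 (hasFDerivAt_pi'.1 hH.hasFDerivAt a) b
  have e2 : dd (EuclideanSpace.single a 1) (dd (EuclideanSpace.single b 1) f)
    = fun y => hess f y a b := rfl
  rw [e2, dd, h1.fderiv]
  rfl

/-! ### Localized plane waves -/

/-- The potential `-N⁻² χ(y) cos(N ξ·y + θ)` produces, up to an error of size `G / N` with `G` fixed,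
the modulated plane wave `χ(y) cos(N ξ·y + θ) z̄`. -/
lemma exists_wave (zb : E8) (hzb : zb ∈ Lambda8) (hne : ¬(zb 3 = 0 ∧ zb 4 = 0 ∧ zb 0 = 0))
    (χ : E3 → ℝ) (hχ : ContDiff ℝ (⊤ : ℕ∞) χ)
    (hχ0 : ∀ y ∉ Metric.closedBall (0 : E3) (1 / 2), χ y = 0) :
    ∃ (ℓ : E3 →L[ℝ] ℝ) (G : E3 → ℝ), Continuous G ∧ HasCompactSupport G ∧ (∀ y, 0 ≤ G y) ∧
      ∀ N : ℝ, 1 ≤ N → ∀ θ : ℝ, ∃ z : E3 → E8, ContDiff ℝ (⊤ : ℕ∞) z ∧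
        (∀ y i, ∑ j : Fin 3, fderiv ℝ (fun y' => Vmat8 (z y') i j) y
          (EuclideanSpace.single j 1) = 0) ∧
        (∀ y ∉ Metric.closedBall (0 : E3) (1 / 2), z y = 0) ∧
        ∀ y, ‖z y - (χ y * Real.cos (N * ℓ y + θ)) • zb‖ ≤ G y / N := by
  obtain ⟨ξ, φ, p₁, p₂, η, A, hQ⟩ := exists_potL zb hzb hne
  set Q := potL φ p₁ p₂ η A with hQdef
  have hQc : Continuous Q := Q.continuous_of_finiteDimensional
  let e : Fin 3 → E3 := fun a => EuclideanSpace.single a 1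
  let K : E3 → Fin 3 → Fin 3 → ℝ := fun y a b => ξ a * dd (e b) χ y + ξ b * dd (e a) χ y
  have hK : Continuous K := by
    refine continuous_pi fun a => continuous_pi fun b => ?_
    have := (dd_contDiff (e a) hχ).continuous
    have := (dd_contDiff (e b) hχ).continuous
    fun_prop
  let ℓ : E3 →L[ℝ] ℝ := innerSL ℝ (WithLp.toLp 2 ξ : E3)
  have hℓ : ∀ a, ℓ (e a) = ξ a := by
    intro a
    simp [ℓ, e, EuclideanSpace.inner_single_right]
  have hS : IsClosed (Metric.closedBall (0 : E3) (1 / 2)) := Metric.isClosed_closedBall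
  have hhess0 : ∀ f : E3 → ℝ, (∀ y ∉ Metric.closedBall (0 : E3) (1 / 2), f y = 0) →
      ∀ y ∉ Metric.closedBall (0 : E3) (1 / 2), hess f y = 0 := by
    intro f hf y hy
    ext a b
    exact dd_eq_zero _ hS (dd_eq_zero _ hS hf) y hy
  refine ⟨ℓ, fun y => ‖Q (hess χ y)‖ + ‖Q (K y)‖, ?_, ?_, fun y => by positivity, ?_⟩
  · exact (hQc.comp (hess_contDiff hχ).continuous).norm.add (hQc.comp hK).norm
  · refine HasCompactSupport.intro (isCompact_closedBall (0 : E3) (1 / 2)) fun y hy => ?_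
    have : K y = 0 := by
      ext a b
      simp [K, dd_eq_zero _ hS hχ0 y hy]
    simp [this, hhess0 χ hχ0 y hy]
  intro N hN θ
  have hN0 : N ≠ 0 := by positivity
  let f : E3 → ℝ := fun y => (-(N⁻¹ ^ 2) * χ y) * Real.cos ((N • ℓ) y + θ)
  have hg : ContDiff ℝ (⊤ : ℕ∞) (fun y => -(N⁻¹ ^ 2) * χ y) := contDiff_const.mul hχ
  have hf : ContDiff ℝ (⊤ : ℕ∞) f :=
    hg.mul (Real.contDiff_cos.comp ((N • ℓ).contDiff.add contDiff_const))
  refine ⟨fun y => Q (hess f y), ?_, ?_, ?_, ?_⟩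
  · exact Q.toContinuousLinearMap.contDiff.comp (hess_contDiff hf)
  · exact fun y i => div_potL_hess φ p₁ p₂ η A hf y i
  · intro y hy
    have : hess f y = 0 := hhess0 f (fun y hy => by simp [f, hχ0 y hy]) y hy
    simp [this]
  · intro y
    have hH : hess f y = (χ y * Real.cos (N * ℓ y + θ)) • (fun a b => ξ a * ξ b)
        - (N⁻¹ ^ 2 * Real.cos (N * ℓ y + θ)) • hess χ y
        - (N⁻¹ * Real.cos (N * ℓ y + θ + Real.pi / 2)) • K y := by
      ext a b
      have hc : f = fun y => -(N⁻¹ ^ 2) * (χ y * Real.cos ((N • ℓ) y + θ)) := by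
        ext y; simp only [f]; ring
      have hχcos : ContDiff ℝ (⊤ : ℕ∞) fun y => χ y * Real.cos ((N • ℓ) y + θ) :=
        hχ.mul (Real.contDiff_cos.comp ((N • ℓ).contDiff.add contDiff_const))
      rw [hess, hc, dd_const_mul _ _ hχcos, dd_const_mul _ _ (dd_contDiff _ hχcos),
        dd_dd_mul_cos _ _ hχ]
      have ha := hℓ a
      have hb := hℓ b
      simp only [e] at ha hb
      have hcos : N * ℓ y + (θ + Real.pi / 2 + Real.pi / 2) = (N * ℓ y + θ) + Real.pi := by ring
      simp only [_root_.smul_apply, smul_eq_mul, ha, hb, Pi.sub_apply, Pi.smul_apply,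
        K, e, hcos, Real.cos_add_pi, hess, ← add_assoc]
      field_simp
      ring
    dsimp only
    rw [hH, map_sub, map_sub, map_smul, map_smul, map_smul, hQ]
    have hN1 : N⁻¹ ≤ 1 := inv_le_one_of_one_le₀ hN
    have hNp : 0 ≤ N⁻¹ := by positivity
    calc _ = ‖(N⁻¹ ^ 2 * Real.cos (N * ℓ y + θ)) • Q (hess χ y)
              + (N⁻¹ * Real.cos (N * ℓ y + θ + Real.pi / 2)) • Q (K y)‖ := by
            rw [← norm_neg]; congr 1; abel
      _ ≤ N⁻¹ * ‖Q (hess χ y)‖ + N⁻¹ * ‖Q (K y)‖ := by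
            refine (norm_add_le _ _).trans ?_
            rw [norm_smul, norm_smul]
            gcongr
            · rw [Real.norm_eq_abs, abs_mul, abs_of_nonneg (by positivity)]
              nlinarith [Real.abs_cos_le_one (N * ℓ y + θ), abs_nonneg (Real.cos (N * ℓ y + θ))]
            · rw [Real.norm_eq_abs, abs_mul, abs_of_nonneg hNp]
              exact mul_le_of_le_one_right hNp (Real.abs_cos_le_one _)
      _ = _ := by field_simp

/-- The `L¹` mass of a linear component `L z` of a field `z` within `G / N` of the scalar multiple
`s z̄` is at least half of what `s z̄` guarantees, once `N` is large relative to `‖L z̄‖`; for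
`L z̄ = 0` there is nothing to bound. -/
lemma mass_bound {F : Type*} [NormedAddCommGroup F] [NormedSpace ℝ F] (L : E8 →ₗ[ℝ] F)
    (hL : ∀ x, ‖L x‖ ≤ ‖x‖) (zb : E8) (z : E3 → E8) (s G : E3 → ℝ) (N I : ℝ)
    (hz : Continuous z) (hzc : HasCompactSupport z) (hs : Integrable s) (hG : Integrable G)
    (h : ∀ y, ‖z y - s y • zb‖ ≤ G y / N) (hI : I / 2 ≤ ∫ y, |s y|)
    (hN : ‖L zb‖ = 0 ∨ (∫ y, G y) / N ≤ I / 4 * ‖L zb‖) :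
    I / 4 * ‖L zb‖ ≤ ∫ y, ‖L (z y)‖ := by
  rcases hN with h0 | hN
  · rw [h0, mul_zero]
    exact integral_nonneg fun y => norm_nonneg _
  have hLc : Continuous L := L.continuous_of_finiteDimensional
  have hint : Integrable fun y => ‖L (z y)‖ := by
    refine Continuous.integrable_of_hasCompactSupport (hLc.comp hz).norm ?_
    exact hzc.comp_left (g := fun x => ‖L x‖) (by simp)
  have hi1 : Integrable fun y => |s y| * ‖L zb‖ := hs.abs.mul_const _
  have hi2 : Integrable fun y => G y / N := hG.div_const _
  have hmono : ∫ y, (|s y| * ‖L zb‖ - G y / N) ≤ ∫ y, ‖L (z y)‖ := by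
    refine integral_mono (hi1.sub hi2) hint fun y => ?_
    have h1 := (hL (z y - s y • zb)).trans (h y)
    have h2 := norm_sub_norm_le (L (s y • zb)) (L (z y))
    rw [← norm_neg, ← map_neg, neg_sub] at h1
    rw [← map_sub, map_smul, norm_smul, Real.norm_eq_abs] at h2
    dsimp only
    linarith
  rw [integral_sub hi1 hi2, integral_mul_const, integral_div] at hmono
  nlinarith [norm_nonneg (L zb), mul_le_mul_of_nonneg_right hI (norm_nonneg (L zb))]

/-- A phase can be chosen so that `|cos|` keeps half of the mass, since `|cos| + |sin| ≥ 1`. -/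
lemma exists_phase (χ ℓ : E3 → ℝ) (hχ : Continuous χ) (hχc : HasCompactSupport χ)
    (h0 : ∀ y, 0 ≤ χ y) (hℓ : Continuous ℓ) :
    ∃ θ : ℝ, (∫ y, χ y) / 2 ≤ ∫ y, |χ y * Real.cos (ℓ y + θ)| := by
  have hint : ∀ θ, Integrable fun y => |χ y * Real.cos (ℓ y + θ)| := fun θ =>
    (Continuous.integrable_of_hasCompactSupport (by fun_prop) hχc.mul_right).abs
  by_contra! hcon
  have h1 := hcon 0
  have h2 := hcon (Real.pi / 2)
  have h3 : ∫ y, χ y ≤ ∫ y, (|χ y * Real.cos (ℓ y + 0)| + |χ y * Real.cos (ℓ y + Real.pi / 2)|) := by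
    refine integral_mono (hχ.integrable_of_hasCompactSupport hχc) ((hint _).add (hint _))
      fun y => ?_
    simp only [add_zero, Real.cos_add_pi_div_two, abs_mul, abs_neg, abs_of_nonneg (h0 y), ← mul_add]
    refine le_mul_of_one_le_right (h0 y) ?_
    have hc := Real.abs_cos_le_one (ℓ y)
    have hs := Real.abs_sin_le_one (ℓ y)
    have := Real.sin_sq_add_cos_sq (ℓ y)
    rw [← sq_abs, ← sq_abs (Real.cos _)] at this
    nlinarith [abs_nonneg (Real.cos (ℓ y)), abs_nonneg (Real.sin (ℓ y))]
  rw [integral_add (hint _) (hint _)] at h3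
  linarith

lemma smul_mem_segment_neg (zb : E8) (s : ℝ) (hs : |s| ≤ 1) : s • zb ∈ segment ℝ (-zb) zb := by
  obtain ⟨h1, h2⟩ := abs_le.1 hs
  refine ⟨(1 - s) / 2, (1 + s) / 2, by linarith, by linarith, by ring, ?_⟩
  module

/-- Localized plane waves: for `z̄ = (b̄,w̄,v̄,M̄,q̄) ∈ Λ` with
`(v̄, b̄) ≠ 0` and `σ` the segment joining `−z̄` to `z̄`, there is `α > 0` such that for every
`ε > 0` there is a smooth state field `z = (b,w,v,M,q) : ℝ³ → ℝ⁸` whose associated matrix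
field is row-wise divergence-free, which vanishes outside the unit ball, takes values in the
`ε`-neighborhood of `σ`, and satisfies `∫|v| ≥ α|v̄|`, `∫|b| ≥ α|b̄|`. -/
theorem stmt_11 (zb : EuclideanSpace ℝ (Fin 8)) (hzb : zb ∈ Lambda8)
    (hne : ¬(zb 3 = 0 ∧ zb 4 = 0 ∧ zb 0 = 0)) :
    ∃ α : ℝ, 0 < α ∧ ∀ ε : ℝ, 0 < ε →
      ∃ z : EuclideanSpace ℝ (Fin 3) → EuclideanSpace ℝ (Fin 8),
        ContDiff ℝ (⊤ : ℕ∞) z ∧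
        -- (i) div_y V = 0 (row-wise)
        (∀ (y : EuclideanSpace ℝ (Fin 3)) (i : Fin 4),
          ∑ j : Fin 3,
            fderiv ℝ (fun y' => Vmat8 (z y') i j) y (EuclideanSpace.single j 1) = 0) ∧
        -- (ii) support in the unit ball
        (∀ y ∉ Metric.ball (0 : EuclideanSpace ℝ (Fin 3)) 1, z y = 0) ∧
        -- (iii) values in the ε-neighborhood of the segment σ = [−z̄, z̄]
        (∀ y, Metric.infDist (z y) (segment ℝ (-zb) zb) < ε) ∧
        -- (iv) lower bounds on the L¹ mass of v and b
        (∫ y, Real.sqrt ((z y 3) ^ 2 + (z y 4) ^ 2)) ≥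
            α * Real.sqrt ((zb 3) ^ 2 + (zb 4) ^ 2) ∧
        (∫ y, |z y 0|) ≥ α * |zb 0| := by
  let B : ContDiffBump (0 : E3) := ⟨1 / 4, 1 / 2, by norm_num, by norm_num⟩
  have hχ : ContDiff ℝ (⊤ : ℕ∞) B := B.contDiff
  have hχc : HasCompactSupport B := B.hasCompactSupport
  have hχ0 : ∀ y ∉ Metric.closedBall (0 : E3) (1 / 2), B y = 0 := by
    intro y hy
    refine B.zero_of_le_dist ?_
    exact (not_le.1 (fun h => hy (Metric.mem_closedBall.2 h))).le
  have hI : 0 < ∫ y, B y := B.integral_pos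
  obtain ⟨ℓ, G, hG, hGc, hG0, hwave⟩ := exists_wave zb hzb hne B hχ hχ0
  have hGi : Integrable G := hG.integrable_of_hasCompactSupport hGc
  obtain ⟨C, hC⟩ := hG.bounded_above_of_compact_support hGc
  let Lv : E8 →ₗ[ℝ] EuclideanSpace ℝ (Fin 2) :=
    { toFun := fun x => !₂[x 3, x 4]
      map_add' := fun x y => by ext k; fin_cases k <;> simp
      map_smul' := fun c x => by ext k; fin_cases k <;> simp }
  let Lb : E8 →ₗ[ℝ] ℝ :=
    { toFun := fun x => x 0
      map_add' := fun x y => by simp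
      map_smul' := fun c x => by simp }
  have hLv : ∀ x, ‖Lv x‖ = Real.sqrt ((x 3) ^ 2 + (x 4) ^ 2) := by
    intro x
    simp [Lv, EuclideanSpace.norm_eq, Fin.sum_univ_two]
  have hLb : ∀ x, ‖Lb x‖ = |x 0| := fun x => rfl
  have hLv1 : ∀ x, ‖Lv x‖ ≤ ‖x‖ := by
    intro x
    rw [hLv, EuclideanSpace.norm_eq]
    refine Real.sqrt_le_sqrt ?_
    simp only [Fin.sum_univ_eight, Real.norm_eq_abs, sq_abs]
    nlinarith [sq_nonneg (x 0), sq_nonneg (x 1), sq_nonneg (x 2), sq_nonneg (x 5),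
      sq_nonneg (x 6), sq_nonneg (x 7)]
  have hLb1 : ∀ x, ‖Lb x‖ ≤ ‖x‖ := fun x => PiLp.norm_apply_le x 0
  refine ⟨(∫ y, B y) / 4, by positivity, fun ε hε => ?_⟩
  have hlim : ∀ c : ℝ, Filter.Tendsto (fun N : ℝ => c / N) Filter.atTop (nhds 0) := fun c =>
    tendsto_const_nhds.div_atTop Filter.tendsto_id
  have hsmall : ∀ m : ℝ, 0 ≤ m → ∀ᶠ N : ℝ in Filter.atTop,
      m = 0 ∨ (∫ y, G y) / N ≤ (∫ y, B y) / 4 * m := by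
    intro m hm
    rcases hm.eq_or_lt with h | h
    · exact Filter.Eventually.of_forall fun _ => Or.inl h.symm
    · filter_upwards [(hlim (∫ y, G y)).eventually_le_const
        (show 0 < (∫ y, B y) / 4 * m by positivity)] with N hN using Or.inr hN
  obtain ⟨N, hN1, hNε, hNv, hNb⟩ := ((Filter.eventually_ge_atTop (1 : ℝ)).and
    (((hlim C).eventually_lt_const hε).and
      ((hsmall ‖Lv zb‖ (norm_nonneg _)).and (hsmall ‖Lb zb‖ (norm_nonneg _))))).exists
  have hℓ : Continuous fun y => N * ℓ y := continuous_const.mul ℓ.continuous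
  obtain ⟨θ, hθ⟩ := exists_phase B (fun y => N * ℓ y) hχ.continuous hχc
    (fun y => B.nonneg) hℓ
  obtain ⟨z, hz, hdiv, hz0, hclose⟩ := hwave N hN1 θ
  have hzc : HasCompactSupport z :=
    HasCompactSupport.intro (isCompact_closedBall (0 : E3) (1 / 2)) hz0
  have hBc : Continuous B := hχ.continuous
  have hs : Integrable fun y => B y * Real.cos (N * ℓ y + θ) :=
    Continuous.integrable_of_hasCompactSupport (by fun_prop) hχc.mul_right
  refine ⟨z, hz, hdiv, fun y hy => hz0 y fun h => hy ?_, fun y => ?_, ?_, ?_⟩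
  · exact Metric.closedBall_subset_ball (by norm_num) h
  · refine (Metric.infDist_le_dist_of_mem (smul_mem_segment_neg zb
      (B y * Real.cos (N * ℓ y + θ)) ?_)).trans_lt ?_
    · rw [abs_mul, abs_of_nonneg B.nonneg]
      exact mul_le_one₀ B.le_one (abs_nonneg _) (Real.abs_cos_le_one _)
    · rw [dist_eq_norm]
      refine (hclose y).trans_lt (lt_of_le_of_lt ?_ hNε)
      have := (le_abs_self _).trans (hC y)
      gcongr
  · have := mass_bound Lv hLv1 zb z _ G N _ hz.continuous hzc hs hGi hclose hθ hNv
    simpa only [hLv] using this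
  · have := mass_bound Lb hLb1 zb z _ G N _ hz.continuous hzc hs hGi hclose hθ hNb
    simpa only [hLb] using this
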